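/- arXiv:2312.03622 — 2 statements merged into one kernel-verified Lean document; each statement's English description precedes it below -/
import Mathlib

section
/- Let A ⊆ B be an inclusion of (not necessarily unital) C*-algebras, and let A† ⊆ B† denote the induced unital inclusion of their minimal unitizations. Then the following are equivalent: (i) the inclusion A ⊆ B has real rank zero; (ii) for every self-adjoint a ∈ A and every ε > 0 there exists a self-adjoint b ∈ B with finite spectrum (computed in the unitization B†) such that ‖a − b‖ ≤ ε; (iii) for every self-adjoint a ∈ A† and every ε > 0 there exists an invertible self-adjoint b ∈ B† such that ‖a − b‖ ≤ ε; (iv) for all positive x, y ∈ A† with x·y = 0 and every ε > 0 there exists a projection p ∈ B† such that ‖p·x − x‖ ≤ ε and ‖(1−p)·y − y‖ ≤ ε. -/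
open Filter Topology

section Defs

variable {B : Type*} [NonUnitalNormedRing B] [StarRing B] [PartialOrder B]

/-- A projection in a C*-algebra: a self-adjoint idempotent. -/
def IsProjection (p : B) : Prop := star p = p ∧ p * p = p

/-- The hereditary subalgebra `cl(a·S·a)`: the norm closure of `{a * b * a : b ∈ S}`. -/
def herSub (S : Set B) (a : B) : Set B := closure {x : B | ∃ b ∈ S, x = a * b * a}

/-- `T` has an approximate unit of projections. -/
def HasApproxUnitOfProjections (T : Set B) : Prop :=
  ∀ x ∈ T, 0 ≤ x → ∀ ε : ℝ, 0 < ε → ∃ p ∈ T, IsProjection p ∧ ‖p * x - x‖ < ε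

/-- The inclusion `A ⊆ S` of C*-algebras has real rank zero. -/
def InclusionRealRankZero (A S : Set B) : Prop :=
  ∀ a ∈ A, 0 ≤ a → a ≠ 0 → HasApproxUnitOfProjections (herSub S a)

end Defs

/-!
(i) ⇒ (ii): a positive `a` is the sum over `k ≥ 0` of the pieces `η · min((a - kη)₊ / η, 1)`.
The factor `min((a - kη)₊ / η, 1)` is a unit for the hereditary subalgebra of `(a - (k + 1)η)₊`,
so, descending in `k`, it can be dominated up to a small error by a projection `rₖ ≥ rₖ₊₁` of the
hereditary subalgebra of `(a - kη)₊`; then `∑ η rₖ` has finite spectrum and is within about `η` of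
`a`. For self-adjoint `a` the approximants of `a⁺` and `a⁻` are orthogonal, so their difference
still has finite spectrum.

(ii) ⇒ (iii): translate a finite spectrum off `0`.

(iii) ⇒ (iv): the positive spectral projection of an invertible element close to `x - y` nearly
fixes `x = (x - y)⁺` and nearly kills `y = (x - y)⁻`.

(iv) ⇒ (i): with `e = min(a / η, 1)`, a projection `p` separating `(a - η)₊` from `1 - e` satisfies
`p ≈ epe ∈ cl(aBa)`, so rounding `epe` gives a projection of `cl(aBa)` that nearly fixes `a`.
-/

theorem isProjection_iff_isStarProjection {B : Type*} [NonUnitalNormedRing B] [StarRing B]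
    {p : B} : IsProjection p ↔ IsStarProjection p :=
  ⟨fun h ↦ ⟨h.2, h.1⟩, fun h ↦ ⟨h.isSelfAdjoint, h.isIdempotentElem⟩⟩

theorem spectrum_add_subset_of_mul_eq_smul {𝕜 D : Type*} [Field 𝕜] [Ring D] [Algebra 𝕜 D]
    {b c : D} {r : 𝕜} (h : b * c = r • b) :
    spectrum 𝕜 (b + c) ⊆ insert r (spectrum 𝕜 c ∪ (· + r) '' spectrum 𝕜 b) := by
  intro z hz
  by_contra hzn
  simp only [Set.mem_insert_iff, Set.mem_union, not_or] at hzn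
  obtain ⟨hzr, hzc, hzb⟩ := hzn
  have hb : IsUnit (algebraMap 𝕜 D (z - r) - b) :=
    spectrum.notMem_iff.mp fun hb ↦ hzb ⟨z - r, hb, sub_add_cancel z r⟩
  have hfactor : (algebraMap 𝕜 D (z - r) - b) * (algebraMap 𝕜 D z - c) =
      algebraMap 𝕜 D (z - r) * (algebraMap 𝕜 D z - (b + c)) := by
    simp only [Algebra.algebraMap_eq_smul_one, sub_mul, mul_sub, smul_mul_assoc, mul_smul_comm,
      one_mul, mul_one, mul_add, h]
    module
  have hunit := hb.mul (spectrum.notMem_iff.mp hzc)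
  rw [hfactor, ((IsUnit.mk0 _ (sub_ne_zero.mpr hzr)).map (algebraMap 𝕜 D)).mul_left_iff] at hunit
  exact hz hunit

theorem finite_spectrum_add_smul {𝕜 D : Type*} [Field 𝕜] [Ring D] [Algebra 𝕜 D] {b r : D}
    (hr : IsIdempotentElem r) (hbr : b * r = b) (hb : (spectrum 𝕜 b).Finite) (t : 𝕜) :
    (spectrum 𝕜 (b + t • r)).Finite := by
  rcases eq_or_ne t 0 with rfl | ht
  · simpa only [zero_smul, add_zero] using hb
  have htr : (spectrum 𝕜 (t • r)).Finite := by
    have hsmul := spectrum.unit_smul_eq_smul r (Units.mk0 t ht)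
    rw [Units.smul_mk0] at hsmul
    rw [hsmul]
    exact (hr.finite_spectrum 𝕜).smul_set
  exact ((htr.union (hb.image _)).insert t).subset
    (spectrum_add_subset_of_mul_eq_smul (by rw [mul_smul_comm, hbr]))

theorem finite_spectrum_sub_of_mul_eq_zero {𝕜 D : Type*} [Field 𝕜] [Ring D] [Algebra 𝕜 D]
    {b c : D} (hbc : b * c = 0) (hb : (spectrum 𝕜 b).Finite) (hc : (spectrum 𝕜 c).Finite) :
    (spectrum 𝕜 (b - c)).Finite := by
  have hneg : (spectrum 𝕜 (-c)).Finite := spectrum.neg_eq (R := 𝕜) c ▸ hc.neg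
  rw [sub_eq_add_neg]
  exact ((hneg.union (hb.image _)).insert 0).subset
    (spectrum_add_subset_of_mul_eq_smul (by rw [mul_neg, hbc, neg_zero, zero_smul]))

section Hereditary

variable {B : Type*} [NonUnitalCStarAlgebra B] {a x y b c : B}

/-- The hereditary C⋆-subalgebra `cl(aBa)` generated by a self-adjoint element `a`, bundled as a
star subalgebra so that it is visibly stable under the algebraic operations and, being closed,
under the functional calculus. Its underlying set is `herSub Set.univ a`. -/
def hereditarySubalgebra (a : B) (ha : IsSelfAdjoint a) : NonUnitalStarSubalgebra ℂ B :=
  NonUnitalStarSubalgebra.topologicalClosure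
    { carrier := {x | ∃ b ∈ Set.univ, x = a * b * a}
      zero_mem' := ⟨0, trivial, by simp⟩
      add_mem' := by
        rintro _ _ ⟨b, -, rfl⟩ ⟨c, -, rfl⟩
        exact ⟨b + c, trivial, by simp only [mul_add, add_mul]⟩
      mul_mem' := by
        rintro _ _ ⟨b, -, rfl⟩ ⟨c, -, rfl⟩
        exact ⟨b * a * a * c, trivial, by simp only [mul_assoc]⟩
      smul_mem' := by
        rintro r _ ⟨b, -, rfl⟩
        exact ⟨r • b, trivial, by simp only [mul_smul_comm, smul_mul_assoc]⟩
      star_mem' := by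
        rintro _ ⟨b, -, rfl⟩
        exact ⟨star b, trivial, by simp only [star_mul, ha.star_eq, mul_assoc]⟩ }

theorem isClosed_hereditarySubalgebra (ha : IsSelfAdjoint a) :
    IsClosed (hereditarySubalgebra a ha : Set B) :=
  isClosed_closure

theorem mul_mul_self_mem_herSub (a b : B) : a * b * a ∈ herSub Set.univ a :=
  subset_closure ⟨b, trivial, rfl⟩

theorem mul_mul_mem_herSub (hx : x ∈ herSub Set.univ a) (b : B) (hy : y ∈ herSub Set.univ a) :
    x * b * y ∈ herSub Set.univ a := by
  refine map_mem_closure₂ (f := fun x y : B ↦ x * b * y)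
    (by fun_prop : Continuous fun z : B × B ↦ z.1 * b * z.2) hx hy ?_
  rintro _ ⟨c, -, rfl⟩ _ ⟨d, -, rfl⟩
  exact ⟨c * a * b * a * d, trivial, by simp only [mul_assoc]⟩

theorem herSub_subset_herSub (hx : x ∈ herSub Set.univ a) :
    herSub Set.univ x ⊆ herSub Set.univ a := by
  refine closure_minimal ?_ isClosed_closure
  rintro _ ⟨b, -, rfl⟩
  exact mul_mul_mem_herSub hx b hx

theorem mul_eq_zero_of_mem_herSub (hxy : x * y = 0) (hb : b ∈ herSub Set.univ x)
    (hc : c ∈ herSub Set.univ y) : b * c = 0 := by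
  have hmem : b * c ∈ closure {0} := by
    refine map_mem_closure₂ continuous_mul hb hc ?_
    rintro _ ⟨b, -, rfl⟩ _ ⟨c, -, rfl⟩
    have : x * b * x * (y * c * y) = x * b * (x * y) * c * y := by simp only [mul_assoc]
    rw [this, hxy]
    simp
  simpa using hmem

theorem cfcₙ_mem_herSub (ha : IsSelfAdjoint a) (f : ℝ → ℝ) (hx : x ∈ herSub Set.univ a) :
    cfcₙ f x ∈ herSub Set.univ a :=
  cfcₙ_mem (s := hereditarySubalgebra a ha) (hs := isClosed_hereditarySubalgebra ha) f hx

-- `a³ / (a² + e²)` lies in `aBa` and is within `e` of `a`, since `2|t|e ≤ t² + e²`.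
theorem mem_herSub_self (ha : IsSelfAdjoint a) : a ∈ herSub Set.univ a := by
  refine Metric.mem_closure_iff.mpr fun ε hε ↦ ?_
  obtain ⟨e, he, heε⟩ := exists_between hε
  set g : ℝ → ℝ := fun t ↦ t / (t ^ 2 + e ^ 2) with hg
  have hgc : Continuous g :=
    Continuous.div (by fun_prop) (by fun_prop) fun t ↦ by positivity
  have : g 0 = 0 := zero_div _
  have hcfc : a - a * cfcₙ g a * a = cfcₙ (fun t ↦ t - t * g t * t) a := by
    rw [cfcₙ_sub (fun t ↦ t) (fun t ↦ t * g t * t) a,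
      cfcₙ_mul (fun t ↦ t * g t) (fun t ↦ t) a, cfcₙ_mul (fun t ↦ t) g a, cfcₙ_id' ℝ a]
  refine ⟨_, ⟨cfcₙ g a, trivial, rfl⟩, ?_⟩
  rw [dist_eq_norm, hcfc]
  refine (norm_cfcₙ_le fun t _ ↦ ?_).trans_lt heε
  have hpos : 0 < t ^ 2 + e ^ 2 := by positivity
  have ht : t - t * g t * t = t * e ^ 2 / (t ^ 2 + e ^ 2) := by
    rw [hg]
    field_simp
    ring
  rw [ht, Real.norm_eq_abs, abs_div, abs_of_pos hpos, div_le_iff₀ hpos, abs_mul,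
    abs_of_pos (by positivity : 0 < e ^ 2)]
  nlinarith [two_mul_le_add_sq |t| e, sq_abs t, mul_nonneg he.le (sq_nonneg t)]

theorem hasApproxUnitOfProjections_herSub [PartialOrder B]
    (h : ∀ δ > 0, ∃ p ∈ herSub Set.univ a, IsStarProjection p ∧ ‖p * a - a‖ ≤ δ) :
    HasApproxUnitOfProjections (herSub Set.univ a) := by
  intro x hx _ ε hε
  obtain ⟨-, ⟨c, -, rfl⟩, hc⟩ := Metric.mem_closure_iff.mp hx (ε / 4) (by positivity)
  rw [dist_eq_norm] at hc
  obtain ⟨p, hpa, hp, hpn⟩ := h (ε / (4 * (‖c * a‖ + 1))) (by positivity)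
  refine ⟨p, hpa, isProjection_iff_isStarProjection.mpr hp, ?_⟩
  have herror : ‖p * (x - a * c * a)‖ ≤ 1 * (ε / 4) := norm_mul_le_of_le hp.norm_le hc.le
  have hgen : ‖(p * a - a) * (c * a)‖ ≤ ε / 4 :=
    calc ‖(p * a - a) * (c * a)‖
        ≤ ε / (4 * (‖c * a‖ + 1)) * (‖c * a‖ + 1) :=
          norm_mul_le_of_le hpn (le_add_of_nonneg_right zero_le_one)
      _ = ε / 4 := by field_simp
  calc ‖p * x - x‖
      = ‖p * (x - a * c * a) - (x - a * c * a) + (p * a - a) * (c * a)‖ := by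
        congr 1
        noncomm_ring
    _ ≤ ‖p * (x - a * c * a)‖ + ‖x - a * c * a‖ + ‖(p * a - a) * (c * a)‖ :=
        (norm_add_le _ _).trans (by gcongr; exact norm_sub_le _ _)
    _ < ε := by linarith

end Hereditary

section Rounding

/-- The continuous function equal to `0` on `(-∞, 1/4]` and to `1` on `[3/4, ∞)`: through the
functional calculus it turns almost idempotent self-adjoint elements into projections. -/
noncomputable def roundIdem (t : ℝ) : ℝ := max 0 (min 1 (2 * t - 1 / 2))

@[fun_prop]
theorem continuous_roundIdem : Continuous roundIdem := by
  unfold roundIdem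
  fun_prop

theorem roundIdem_zero : roundIdem 0 = 0 := by norm_num [roundIdem]

theorem roundIdem_one_sub (t : ℝ) : roundIdem (1 - t) = 1 - roundIdem t := by
  unfold roundIdem
  grind

theorem roundIdem_eq_or {t : ℝ} (ht : |t * t - t| ≤ 3 / 16) :
    roundIdem t = 0 ∧ t ≤ 1 / 4 ∨ roundIdem t = 1 ∧ 3 / 4 ≤ t := by
  have hlower := (abs_le.mp ht).1
  rcases le_or_gt t (1 / 4) with h | h
  · exact .inl ⟨max_eq_left ((min_le_right _ _).trans (by linarith)), h⟩
  · have h' : 3 / 4 ≤ t := by nlinarith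
    refine .inr ⟨?_, h'⟩
    rw [roundIdem, min_eq_left (by linarith), max_eq_right zero_le_one]

theorem abs_roundIdem_sub_le {t : ℝ} (ht : |t * t - t| ≤ 3 / 16) :
    |roundIdem t - t| ≤ 2 * |t * t - t| := by
  rw [← mul_sub_one, abs_mul]
  rcases roundIdem_eq_or ht with ⟨h, h'⟩ | ⟨h, h'⟩
  · rw [h, zero_sub, abs_neg, abs_of_neg (by linarith : t - 1 < 0)]
    nlinarith [abs_nonneg t]
  · rw [h, abs_sub_comm, abs_of_pos (by linarith : 0 < t)]
    nlinarith [abs_nonneg (t - 1)]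

variable {D : Type*} [CStarAlgebra D] {d p q x : D} {δ : ℝ}

theorem abs_mul_self_sub_le_of_mem_spectrum (hd : IsSelfAdjoint d) {t : ℝ}
    (ht : t ∈ spectrum ℝ d) : |t * t - t| ≤ ‖d * d - d‖ := by
  have hcfc : cfc (fun t : ℝ ↦ t * t - t) d = d * d - d := by
    rw [cfc_sub (fun t : ℝ ↦ t * t) (fun t ↦ t) d, cfc_mul (fun t : ℝ ↦ t) (fun t ↦ t) d,
      cfc_id' ℝ d]
  rw [← hcfc, ← Real.norm_eq_abs]
  exact norm_apply_le_norm_cfc (fun t : ℝ ↦ t * t - t) d ht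

theorem isStarProjection_cfc_roundIdem (hd : IsSelfAdjoint d) (h : ‖d * d - d‖ ≤ 3 / 16) :
    IsStarProjection (cfc roundIdem d) := by
  refine ⟨?_, cfc_predicate _ _⟩
  rw [IsIdempotentElem, ← cfc_mul roundIdem roundIdem d]
  refine cfc_congr fun t ht ↦ ?_
  rcases roundIdem_eq_or ((abs_mul_self_sub_le_of_mem_spectrum hd ht).trans h) with ⟨h, -⟩ | ⟨h, -⟩
  all_goals simp [h]

theorem norm_cfc_roundIdem_sub_le (hd : IsSelfAdjoint d) (h : ‖d * d - d‖ ≤ 3 / 16) :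
    ‖cfc roundIdem d - d‖ ≤ 2 * ‖d * d - d‖ := by
  nth_rewrite 2 [← cfc_id' ℝ d]
  rw [← cfc_sub roundIdem (fun t ↦ t) d]
  refine norm_cfc_le (by positivity) fun t ht ↦ ?_
  have ht' := abs_mul_self_sub_le_of_mem_spectrum hd ht
  exact (abs_roundIdem_sub_le (ht'.trans h)).trans (by gcongr)

theorem norm_mul_self_sub_le_of_norm_sub_le (hp : IsStarProjection p) (hδ : δ ≤ 1)
    (h : ‖d - p‖ ≤ δ) : ‖d * d - d‖ ≤ 4 * δ := by
  have hδ0 : 0 ≤ δ := (norm_nonneg _).trans h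
  have hdd : ‖(d - p) * d‖ ≤ δ * (δ + 1) := by
    refine norm_mul_le_of_le h ?_
    simpa using norm_add_le_of_le h hp.norm_le
  have hpd : ‖(1 - p) * (d - p)‖ ≤ 1 * δ := norm_mul_le_of_le hp.one_sub.norm_le h
  calc ‖d * d - d‖ = ‖(d - p) * d - (1 - p) * (d - p)‖ := by
        simp only [sub_mul, mul_sub, one_mul, hp.isIdempotentElem.eq]
        abel_nf
    _ ≤ δ * (δ + 1) + 1 * δ := norm_sub_le_of_le hdd hpd
    _ ≤ 4 * δ := by nlinarith

theorem cfc_roundIdem_of_norm_sub_le (hd : IsSelfAdjoint d) (hp : IsStarProjection p)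
    (hδ : δ ≤ 3 / 64) (h : ‖d - p‖ ≤ δ) :
    IsStarProjection (cfc roundIdem d) ∧ ‖cfc roundIdem d - p‖ ≤ 9 * δ := by
  have hdd := norm_mul_self_sub_le_of_norm_sub_le hp (by linarith) h
  have hdd' : ‖d * d - d‖ ≤ 3 / 16 := by linarith
  refine ⟨isStarProjection_cfc_roundIdem hd hdd', ?_⟩
  calc ‖cfc roundIdem d - p‖ = ‖(cfc roundIdem d - d) + (d - p)‖ := by rw [sub_add_sub_cancel]
    _ ≤ 2 * ‖d * d - d‖ + δ := norm_add_le_of_le (norm_cfc_roundIdem_sub_le hd hdd') h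
    _ ≤ 9 * δ := by linarith

theorem cfc_mem_herSub {a : D} (ha : IsSelfAdjoint a) {f : ℝ → ℝ} (hf : Continuous f)
    (hf0 : f 0 = 0) (hx : x ∈ herSub Set.univ a) : cfc f x ∈ herSub Set.univ a := by
  rw [← cfcₙ_eq_cfc hf.continuousOn hf0]
  exact cfcₙ_mem_herSub ha f hx

theorem mul_cfc_roundIdem_eq_self (hd : IsSelfAdjoint d) (hq : IsSelfAdjoint q)
    (hqd : q * d = q) : q * cfc roundIdem d = q := by
  have hd' : IsSelfAdjoint (1 - d) := (IsSelfAdjoint.one D).sub hd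
  have hcfc : cfc roundIdem (1 - d) = 1 - cfc roundIdem d := by
    have hsub : 1 - d = cfc (fun t : ℝ ↦ 1 - t) d := by
      rw [cfc_sub (fun _ : ℝ ↦ (1 : ℝ)) (fun t ↦ t) d, cfc_const_one ℝ d, cfc_id' ℝ d]
    rw [hsub, ← cfc_comp' roundIdem (fun t : ℝ ↦ 1 - t) d]
    simp only [roundIdem_one_sub]
    rw [cfc_sub (fun _ : ℝ ↦ (1 : ℝ)) roundIdem d, cfc_const_one ℝ d]
  have hmem : 1 - cfc roundIdem d ∈ herSub Set.univ (1 - d) :=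
    hcfc ▸ cfc_mem_herSub hd' continuous_roundIdem roundIdem_zero (mem_herSub_self hd')
  have hzero := mul_eq_zero_of_mem_herSub (by rw [mul_sub, mul_one, hqd, sub_self])
    (mem_herSub_self hq) hmem
  rwa [mul_sub, mul_one, sub_eq_zero, eq_comm] at hzero

-- The corner sum `d = q + (1 - q)p(1 - q)` is close to `p` and satisfies `qd = q`; round it.
theorem exists_isStarProjection_mul_eq_left {a : D} (ha : IsSelfAdjoint a)
    (hp : IsStarProjection p) (hpa : p ∈ herSub Set.univ a)
    (hq : IsStarProjection q) (hqa : q ∈ herSub Set.univ a)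
    (hδ : δ ≤ 1 / 48) (hpq : ‖p * q - q‖ ≤ δ) :
    ∃ r ∈ herSub Set.univ a, IsStarProjection r ∧ q * r = q ∧ ‖r - p‖ ≤ 18 * δ := by
  set d := q + (1 - q) * p * (1 - q) with hd
  have hdsa : IsSelfAdjoint d := by
    refine hq.isSelfAdjoint.add ?_
    simpa only [hq.one_sub.isSelfAdjoint.star_eq] using hp.isSelfAdjoint.conjugate (1 - q)
  have hda : d ∈ herSub Set.univ a := by
    have hexpand : d = q + (p - q * p - p * q + q * p * q) := by
      rw [hd]
      noncomm_ring
    let H := hereditarySubalgebra a ha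
    have hpH : p ∈ H := hpa
    have hqH : q ∈ H := hqa
    rw [hexpand]
    exact add_mem hqH (add_mem (sub_mem (sub_mem hpH (mul_mem hqH hpH)) (mul_mem hpH hqH))
      (mul_mem (mul_mem hqH hpH) hqH))
  have hqd : q * d = q := by
    rw [hd, mul_add, hq.isIdempotentElem.eq, ← mul_assoc, ← mul_assoc, hq.mul_one_sub_self,
      zero_mul, zero_mul, add_zero]
  have hdp : ‖d - p‖ ≤ 2 * δ := by
    have hstar : ‖star (p * q - q)‖ ≤ δ := by rwa [norm_star]
    have hmul : ‖(1 - q) * (p * q - q)‖ ≤ 1 * δ := norm_mul_le_of_le hq.one_sub.norm_le hpq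
    calc ‖d - p‖ = ‖-(star (p * q - q) + (1 - q) * (p * q - q))‖ := by
          congr 1
          simp only [hd, star_sub, star_mul, hp.isSelfAdjoint.star_eq, hq.isSelfAdjoint.star_eq,
            mul_sub, sub_mul, one_mul, mul_one, hq.isIdempotentElem.eq, mul_assoc]
          abel
      _ ≤ δ + 1 * δ := by
          rw [norm_neg]
          exact norm_add_le_of_le hstar hmul
      _ = 2 * δ := by ring
  obtain ⟨hr, hrp⟩ := cfc_roundIdem_of_norm_sub_le hdsa hp (by linarith) hdp
  exact ⟨cfc roundIdem d, cfc_mem_herSub ha continuous_roundIdem roundIdem_zero hda, hr,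
    mul_cfc_roundIdem_eq_self hdsa hq.isSelfAdjoint hqd, hrp.trans_eq (by ring)⟩

end Rounding

section Cutdown

variable {D : Type*} [CStarAlgebra D] {a r : D} {s η : ℝ}

/-- The element `(a - s)₊`. -/
noncomputable def cutdown (a : D) (s : ℝ) : D := cfc (fun t : ℝ ↦ max (t - s) 0) a

/-- The element `min ((a - s)₊ / η, 1)`, which interpolates between the spectral projections
of `a` for `(s, ∞)` and for `[s + η, ∞)`. -/
noncomputable def ramp (a : D) (s η : ℝ) : D :=
  cfc (fun t : ℝ ↦ min (max (t - s) 0 / η) 1) a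

theorem isSelfAdjoint_cutdown (a : D) (s : ℝ) : IsSelfAdjoint (cutdown a s) :=
  cfc_predicate _ _

theorem isSelfAdjoint_ramp (a : D) (s η : ℝ) : IsSelfAdjoint (ramp a s η) :=
  cfc_predicate _ _

theorem cutdown_add_smul_ramp (a : D) (s : ℝ) (hη : 0 < η) :
    cutdown a (s + η) + η • ramp a s η = cutdown a s := by
  rw [cutdown, cutdown, ramp, ← cfc_smul η (fun t : ℝ ↦ min (max (t - s) 0 / η) 1) a,
    ← cfc_add a (fun t : ℝ ↦ max (t - (s + η)) 0) (fun t ↦ η • min (max (t - s) 0 / η) 1)]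
  refine cfc_congr fun t _ ↦ ?_
  have hmin : η • min (max (t - s) 0 / η) 1 = min (max (t - s) 0) η := by
    rw [smul_eq_mul, mul_min_of_nonneg _ _ hη.le, mul_one, mul_div_cancel₀ _ hη.ne']
  simp only [hmin]
  grind

theorem cutdown_mul_one_sub_ramp (a : D) (s : ℝ) (hη : 0 < η) :
    cutdown a (s + η) * (1 - ramp a s η) = 0 := by
  rw [mul_sub, mul_one, sub_eq_zero, cutdown, ramp,
    ← cfc_mul (fun t : ℝ ↦ max (t - (s + η)) 0) (fun t ↦ min (max (t - s) 0 / η) 1) a]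
  refine cfc_congr fun t _ ↦ ?_
  rcases le_total t (s + η) with h | h
  · rw [max_eq_right (by linarith), zero_mul]
  · rw [min_eq_right, mul_one]
    rw [one_le_div hη]
    exact (by linarith : η ≤ t - s).trans (le_max_left _ _)

theorem norm_ramp_le_one (a : D) (s : ℝ) (hη : 0 < η) : ‖ramp a s η‖ ≤ 1 := by
  refine norm_cfc_le zero_le_one fun t _ ↦ ?_
  rw [Real.norm_of_nonneg (by positivity)]
  exact min_le_right _ _

theorem cutdown_add_mem_herSub (ha : IsSelfAdjoint a) (s : ℝ) (hη : 0 < η) :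
    cutdown a (s + η) ∈ herSub Set.univ (cutdown a s) := by
  have hcomp : cutdown a (s + η) = cfc (fun t : ℝ ↦ max (t - η) 0) (cutdown a s) := by
    rw [cutdown, cutdown, ← cfc_comp' (fun t : ℝ ↦ max (t - η) 0) (fun t ↦ max (t - s) 0) a]
    refine cfc_congr fun t _ ↦ ?_
    grind
  rw [hcomp]
  exact cfc_mem_herSub (isSelfAdjoint_cutdown a s) (by fun_prop) (by simpa using hη.le)
    (mem_herSub_self (isSelfAdjoint_cutdown a s))

theorem ramp_mem_herSub (ha : IsSelfAdjoint a) (s η : ℝ) :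
    ramp a s η ∈ herSub Set.univ (cutdown a s) := by
  have hcomp : ramp a s η = cfc (fun t : ℝ ↦ min (max t 0 / η) 1) (cutdown a s) := by
    rw [cutdown, ramp, ← cfc_comp' (fun t : ℝ ↦ min (max t 0 / η) 1) (fun t ↦ max (t - s) 0) a]
    simp only [le_max_right, max_eq_left]
  rw [hcomp]
  exact cfc_mem_herSub (isSelfAdjoint_cutdown a s) (by fun_prop) (by simp)
    (mem_herSub_self (isSelfAdjoint_cutdown a s))

theorem cutdown_eq_zero (hs : ‖a‖ ≤ s) : cutdown a s = 0 := by
  nontriviality D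
  rw [cutdown, ← cfc_const_zero ℝ a]
  refine cfc_congr fun t ht ↦ max_eq_right ?_
  linarith [spectrum.norm_le_norm_of_mem ht, Real.le_norm_self t]

theorem mul_ramp_eq_self (hη : 0 < η)
    (hra : r ∈ herSub Set.univ (cutdown a (s + η))) : r * ramp a s η = r := by
  have hmem : 1 - ramp a s η ∈ herSub Set.univ (1 - ramp a s η) :=
    mem_herSub_self ((IsSelfAdjoint.one D).sub (isSelfAdjoint_ramp a s η))
  have hzero := mul_eq_zero_of_mem_herSub (cutdown_mul_one_sub_ramp a s hη) hra hmem
  rwa [mul_sub, mul_one, sub_eq_zero, eq_comm] at hzero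

variable [PartialOrder D] [StarOrderedRing D]

theorem cutdown_nonneg (a : D) (s : ℝ) : 0 ≤ cutdown a s :=
  cfc_nonneg fun _ _ ↦ le_max_right _ _

theorem ramp_nonneg (a : D) (s : ℝ) (hη : 0 < η) : 0 ≤ ramp a s η :=
  cfc_nonneg fun t _ ↦ by positivity

theorem ramp_le_one (a : D) (s η : ℝ) : ramp a s η ≤ 1 :=
  cfc_le_one _ _ fun _ _ ↦ min_le_right _ _

theorem cutdown_eq_sub_algebraMap (ha : 0 ≤ a) (hs : s ≤ 0) :
    cutdown a s = a - algebraMap ℝ D s := by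
  nth_rewrite 2 [← cfc_id' ℝ a]
  rw [cutdown, ← cfc_const s a, ← cfc_sub (fun t : ℝ ↦ t) (fun _ ↦ s) a]
  refine cfc_congr fun t ht ↦ max_eq_left ?_
  linarith [spectrum_nonneg_of_nonneg ha ht]

theorem norm_sub_cutdown_le (ha : 0 ≤ a) (hs : 0 ≤ s) : ‖a - cutdown a s‖ ≤ s := by
  nth_rewrite 1 [← cfc_id' ℝ a]
  rw [cutdown, ← cfc_sub (fun t : ℝ ↦ t) (fun t ↦ max (t - s) 0) a]
  refine norm_cfc_le hs fun t ht ↦ ?_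
  have ht0 := spectrum_nonneg_of_nonneg ha ht
  rw [Real.norm_eq_abs, abs_le]
  grind

end Cutdown

section ProjectionOrder

variable {D : Type*} [CStarAlgebra D] [PartialOrder D] [StarOrderedRing D] {r m : D} {δ : ℝ}

theorem le_of_mul_eq_left (hr : IsStarProjection r) (hm : 0 ≤ m) (h : r * m = r) : r ≤ m := by
  have hmr : m * r = r := by
    simpa [hr.isSelfAdjoint.star_eq, (IsSelfAdjoint.of_nonneg hm).star_eq] using congrArg star h
  have hcompress : star (1 - r) * m * (1 - r) = m - r := by
    rw [hr.one_sub.isSelfAdjoint.star_eq, sub_mul, one_mul, h, mul_sub, mul_one, sub_mul, hmr,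
      hr.isIdempotentElem.eq, sub_self, sub_zero]
  rw [← sub_nonneg, ← hcompress]
  exact star_left_conjugate_nonneg hm (1 - r)

theorem le_add_algebraMap_of_norm_mul_sub_le (hr : IsStarProjection r) (hm : 0 ≤ m) (hm1 : m ≤ 1)
    (h : ‖r * m - m‖ ≤ δ) : m ≤ r + algebraMap ℝ D (2 * δ) := by
  have hms : star m = m := (IsSelfAdjoint.of_nonneg hm).star_eq
  have hrs : star r = r := hr.isSelfAdjoint.star_eq
  have hcorner : r * m * r ≤ r := by
    have := star_left_conjugate_le_conjugate hm1 r
    rwa [hrs, mul_one, hr.isIdempotentElem.eq] at this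
  have hdefect : IsSelfAdjoint (m - r * m * r) := by
    simp only [IsSelfAdjoint, star_sub, star_mul, hms, hrs, mul_assoc]
  have hnorm : ‖m - r * m * r‖ ≤ 2 * δ := by
    have hstar : ‖r * star (r * m - m)‖ ≤ 1 * δ :=
      norm_mul_le_of_le hr.norm_le (by rwa [norm_star])
    calc ‖m - r * m * r‖ = ‖(r * m - m) + r * star (r * m - m)‖ := by
          rw [← norm_neg, star_sub, star_mul, hms, hrs, mul_sub, mul_assoc]
          congr 1
          abel
      _ ≤ δ + 1 * δ := norm_add_le_of_le h hstar
      _ = 2 * δ := by ring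
  calc m = r * m * r + (m - r * m * r) := by rw [add_sub_cancel]
    _ ≤ r + algebraMap ℝ D (2 * δ) :=
        add_le_add hcorner (hdefect.le_algebraMap_norm_self.trans (algebraMap_mono D hnorm))

end ProjectionOrder

section SpectralApproximation

variable {D : Type*} [CStarAlgebra D] [PartialOrder D] [StarOrderedRing D] {a b q r : D}
  {s η ε δ : ℝ}

/-- A self-adjoint element `b` with finite spectrum which approximates `(a - s)₊` between
`(a - s)₊ - δ` and `(a - (s - η))₊`, together with a projection `q` in the hereditary subalgebra
of `(a - s)₊` that supports it. The two one-sided bounds are what survives the induction on `s`: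
the error `δ` is cumulative and can be made arbitrarily small, whereas `η` is not. -/
structure IsSpectralApprox (a : D) (η s δ : ℝ) (b q : D) : Prop where
  isSelfAdjoint : IsSelfAdjoint b
  finite_spectrum : (spectrum ℂ b).Finite
  isStarProjection : IsStarProjection q
  mem_herSub : q ∈ herSub Set.univ (cutdown a s)
  mul_eq_left : b * q = b
  cutdown_le : cutdown a s ≤ b + algebraMap ℝ D δ
  le_cutdown : b ≤ cutdown a (s - η)

theorem isSpectralApprox_zero (hs : ‖a‖ ≤ s) (hδ : 0 ≤ δ) :
    IsSpectralApprox a η s δ 0 0 where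
  isSelfAdjoint := .zero D
  finite_spectrum := IsIdempotentElem.zero.finite_spectrum ℂ
  isStarProjection := .zero D
  mem_herSub := zero_mem (hereditarySubalgebra (cutdown a s) (isSelfAdjoint_cutdown a s))
  mul_eq_left := mul_zero 0
  cutdown_le := by simpa only [cutdown_eq_zero hs, zero_add] using algebraMap_nonneg D hδ
  le_cutdown := cutdown_nonneg a (s - η)

theorem exists_isStarProjection_ramp_le (ha : IsSelfAdjoint a) (hη : 0 < η) (hδ : 0 < δ)
    (h : HasApproxUnitOfProjections (herSub Set.univ (cutdown a s)))
    (hq : IsStarProjection q) (hqa : q ∈ herSub Set.univ (cutdown a (s + η))) :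
    ∃ r ∈ herSub Set.univ (cutdown a s), IsStarProjection r ∧ q * r = q ∧
      ramp a s η ≤ r + algebraMap ℝ D δ := by
  have hc : IsSelfAdjoint (cutdown a s) := isSelfAdjoint_cutdown a s
  set m := ramp a s η
  set κ := min (1 / 48) (δ / 38)
  have hκδ : κ ≤ δ / 38 := min_le_right _ _
  obtain ⟨p, hpa, hp, hpm⟩ :=
    h m (ramp_mem_herSub ha s η) (ramp_nonneg a s hη) κ (by positivity)
  rw [isProjection_iff_isStarProjection] at hp
  have hmq : m * q = q := by
    have := congrArg star (mul_ramp_eq_self hη hqa)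
    rwa [star_mul, hq.isSelfAdjoint.star_eq, (isSelfAdjoint_ramp a s η).star_eq] at this
  have hpq : ‖p * q - q‖ ≤ κ := by
    have hfactor : p * q - q = (p * m - m) * q := by rw [sub_mul, mul_assoc, hmq]
    simpa [hfactor] using norm_mul_le_of_le hpm.le hq.norm_le
  obtain ⟨r, hra, hr, hqr, hrp⟩ := exists_isStarProjection_mul_eq_left hc hp hpa hq
    (herSub_subset_herSub (cutdown_add_mem_herSub ha s hη) hqa) (min_le_left _ _) hpq
  have hrm : ‖r * m - m‖ ≤ 19 * κ :=
    calc ‖r * m - m‖ = ‖(r - p) * m + (p * m - m)‖ := by rw [sub_mul, sub_add_sub_cancel]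
      _ ≤ 18 * κ * 1 + κ :=
        norm_add_le_of_le (norm_mul_le_of_le hrp (norm_ramp_le_one a s hη)) hpm.le
      _ = 19 * κ := by ring
  refine ⟨r, hra, hr, hqr, (le_add_algebraMap_of_norm_mul_sub_le hr (ramp_nonneg a s hη)
    (ramp_le_one a s η) hrm).trans ?_⟩
  exact add_le_add_right (algebraMap_mono D (by linarith)) r

theorem IsSpectralApprox.step (ha : IsSelfAdjoint a) (hη : 0 < η)
    (hunit : HasApproxUnitOfProjections (herSub Set.univ (cutdown a s)))
    (h : IsSpectralApprox a η (s + η) δ b q) (hδε : δ < ε) :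
    ∃ r, IsSpectralApprox a η s ε (b + η • r) r := by
  obtain ⟨r, hra, hr, hqr, hmr⟩ := exists_isStarProjection_ramp_le ha hη
    (div_pos (sub_pos.mpr hδε) hη) hunit h.isStarProjection h.mem_herSub
  have hbr : b * r = b := by rw [← h.mul_eq_left, mul_assoc, hqr]
  refine ⟨r, h.isSelfAdjoint.add (.smul (.all η) hr.isSelfAdjoint),
    ?_, hr, hra, ?_, ?_, ?_⟩
  · simpa only [Complex.coe_smul] using
      finite_spectrum_add_smul hr.isIdempotentElem hbr h.finite_spectrum (η : ℂ)
  · rw [add_mul, hbr, smul_mul_assoc, hr.isIdempotentElem.eq]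
  · have hstep : η • ramp a s η ≤ η • r + algebraMap ℝ D (ε - δ) :=
      calc η • ramp a s η ≤ η • (r + algebraMap ℝ D ((ε - δ) / η)) :=
            smul_le_smul_of_nonneg_left hmr hη.le
        _ = η • r + algebraMap ℝ D (ε - δ) := by
            rw [smul_add, Algebra.smul_def η (algebraMap ℝ D _), ← map_mul,
              mul_div_cancel₀ _ hη.ne']
    calc cutdown a s = cutdown a (s + η) + η • ramp a s η := (cutdown_add_smul_ramp a s hη).symm
      _ ≤ (b + algebraMap ℝ D δ) + (η • r + algebraMap ℝ D (ε - δ)) :=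
          add_le_add h.cutdown_le hstep
      _ = b + η • r + algebraMap ℝ D ε := by rw [map_sub]; abel
  · have hr_le : r ≤ ramp a (s - η) η :=
      le_of_mul_eq_left hr (ramp_nonneg a _ hη) (mul_ramp_eq_self hη (by rwa [sub_add_cancel]))
    have hle : b ≤ cutdown a s := by simpa only [add_sub_cancel_right] using h.le_cutdown
    calc b + η • r ≤ cutdown a (s - η + η) + η • ramp a (s - η) η := by
          rw [sub_add_cancel]
          exact add_le_add hle (smul_le_smul_of_nonneg_left hr_le hη.le)
      _ = cutdown a (s - η) := cutdown_add_smul_ramp a (s - η) hη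

theorem exists_isSpectralApprox (ha : IsSelfAdjoint a) (hη : 0 < η)
    (h : ∀ s, 0 ≤ s → HasApproxUnitOfProjections (herSub Set.univ (cutdown a s)))
    (n : ℕ) (hs : 0 ≤ s) (hn : ‖a‖ ≤ s + n * η) (hδ : 0 < δ) :
    ∃ b q, IsSpectralApprox a η s δ b q := by
  induction n generalizing s δ with
  | zero => exact ⟨0, 0, isSpectralApprox_zero (by simpa using hn) hδ.le⟩
  | succ n ih =>
    have hn' : ‖a‖ ≤ s + η + n * η := by
      push_cast at hn
      linarith
    obtain ⟨b, q, hbq⟩ := ih (by positivity) hn' (half_pos hδ)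
    obtain ⟨r, hr⟩ := hbq.step ha hη (h s hs) (half_lt_self hδ)
    exact ⟨_, r, hr⟩

theorem norm_le_of_neg_algebraMap_le (ha : IsSelfAdjoint a) (hδ : 0 ≤ δ)
    (hlower : -algebraMap ℝ D δ ≤ a) (hupper : a ≤ algebraMap ℝ D δ) : ‖a‖ ≤ δ := by
  rw [← map_neg, algebraMap_le_iff_le_spectrum] at hlower
  rw [le_algebraMap_iff_spectrum_le] at hupper
  rw [← cfc_id' ℝ a]
  exact norm_cfc_le hδ fun t ht ↦ abs_le.mpr ⟨hlower t ht, hupper t ht⟩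

theorem exists_finite_spectrum_norm_sub_le_of_nonneg (ha : 0 ≤ a)
    (h : ∀ s, 0 ≤ s → HasApproxUnitOfProjections (herSub Set.univ (cutdown a s))) (hε : 0 < ε) :
    ∃ b ∈ herSub Set.univ a, IsSelfAdjoint b ∧ (spectrum ℂ b).Finite ∧ ‖a - b‖ ≤ ε := by
  obtain ⟨n, hn⟩ := exists_nat_ge (‖a‖ / ε)
  rw [div_le_iff₀ hε] at hn
  have hsa : IsSelfAdjoint a := .of_nonneg ha
  obtain ⟨b, q, hbq⟩ := exists_isSpectralApprox hsa hε h n le_rfl (by simpa using hn) hε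
  have hcut : cutdown a 0 = a := by simp [cutdown_eq_sub_algebraMap ha le_rfl]
  have hbqb : b = q * b * q := by
    have := congrArg star hbq.mul_eq_left
    rw [star_mul, hbq.isStarProjection.isSelfAdjoint.star_eq, hbq.isSelfAdjoint.star_eq] at this
    rw [this, hbq.mul_eq_left]
  have hqa : q ∈ herSub Set.univ a := hcut ▸ hbq.mem_herSub
  have hcut' : cutdown a (0 - ε) = a + algebraMap ℝ D ε := by
    rw [zero_sub, cutdown_eq_sub_algebraMap ha (neg_nonpos.mpr hε.le), map_neg, sub_neg_eq_add]
  refine ⟨b, hbqb ▸ mul_mul_mem_herSub hqa b hqa, hbq.isSelfAdjoint, hbq.finite_spectrum,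
    norm_le_of_neg_algebraMap_le (hsa.sub hbq.isSelfAdjoint) hε.le ?_ ?_⟩
  · rw [neg_le_sub_iff_le_add]
    exact hcut' ▸ hbq.le_cutdown
  · rw [sub_le_iff_le_add']
    exact hcut ▸ hbq.cutdown_le

end SpectralApproximation

section Unitization

variable {B : Type*} [NonUnitalCStarAlgebra B] {a : B}

theorem herSub_inr (ha : IsSelfAdjoint a) :
    herSub Set.univ (a : Unitization ℂ B) =
      (fun x : B ↦ (x : Unitization ℂ B)) '' herSub Set.univ a := by
  have hiso : Isometry (fun x : B ↦ (x : Unitization ℂ B)) := Unitization.isometry_inr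
  apply Set.Subset.antisymm
  · refine closure_minimal ?_ (hiso.isClosedEmbedding.isClosedMap _ isClosed_closure)
    rintro _ ⟨m, -, rfl⟩
    refine ⟨m.fst • (a * a) + a * m.snd * a, ?_, ?_⟩
    · have haa : a ∈ hereditarySubalgebra a ha := mem_herSub_self ha
      exact add_mem (SMulMemClass.smul_mem m.fst (mul_mem haa haa))
        (mul_mul_self_mem_herSub a m.snd)
    · conv_rhs => rw [← Unitization.inl_fst_add_inr_snd_eq m]
      ext <;> simp [mul_add, add_mul, smul_mul_assoc]
  · rintro _ ⟨x, hx, rfl⟩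
    refine map_mem_closure hiso.continuous hx ?_
    rintro _ ⟨b, -, rfl⟩
    exact ⟨b, trivial, by simp only [Unitization.inr_mul]⟩

theorem exists_mem_inr_eq_cfc {A : NonUnitalStarSubalgebra ℂ B} (hA : IsClosed (A : Set B))
    (ha : a ∈ A) {f : ℝ → ℝ} (hf0 : f 0 = 0) :
    ∃ c ∈ A, (c : Unitization ℂ B) = cfc f (a : Unitization ℂ B) :=
  ⟨cfcₙ f a, cfcₙ_mem (hs := hA) f ha, Unitization.real_cfcₙ_eq_cfc_inr a f hf0⟩

variable [PartialOrder B] [StarOrderedRing B]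

theorem hasApproxUnitOfProjections_herSub_inr_iff (ha : IsSelfAdjoint a) :
    HasApproxUnitOfProjections (herSub Set.univ (a : Unitization ℂ B)) ↔
      HasApproxUnitOfProjections (herSub Set.univ a) := by
  simp only [HasApproxUnitOfProjections, herSub_inr ha, Set.forall_mem_image, Set.exists_mem_image,
    isProjection_iff_isStarProjection, Unitization.isStarProjection_inr_iff,
    Unitization.inr_nonneg_iff, ← Unitization.inr_mul, ← Unitization.inr_sub, Unitization.norm_inr]

end Unitization

section RealRankZero

variable {B : Type*} [NonUnitalCStarAlgebra B] [PartialOrder B] [StarOrderedRing B]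
  {A : NonUnitalStarSubalgebra ℂ B} {a : B} {s ε : ℝ}

theorem InclusionRealRankZero.hasApproxUnitOfProjections_cutdown
    (h : InclusionRealRankZero (A : Set B) Set.univ) (hA : IsClosed (A : Set B)) (ha : a ∈ A)
    (hs : 0 ≤ s) :
    HasApproxUnitOfProjections (herSub Set.univ (cutdown (a : Unitization ℂ B) s)) := by
  obtain ⟨c, hcA, hcut⟩ : ∃ c ∈ A, (c : Unitization ℂ B) = cutdown (a : Unitization ℂ B) s :=
    exists_mem_inr_eq_cfc hA ha (by simpa using hs)
  have hc : 0 ≤ c := Unitization.inr_nonneg_iff.mp (hcut ▸ cutdown_nonneg _ s)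
  rw [← hcut, hasApproxUnitOfProjections_herSub_inr_iff (.of_nonneg hc)]
  rcases eq_or_ne c 0 with rfl | hc0
  · exact hasApproxUnitOfProjections_herSub fun δ hδ ↦
      ⟨0, zero_mem (hereditarySubalgebra (0 : B) (.zero B)), .zero B, by simpa using hδ.le⟩
  · exact h c hcA hc hc0

theorem InclusionRealRankZero.exists_finite_spectrum_of_nonneg
    (h : InclusionRealRankZero (A : Set B) Set.univ) (hA : IsClosed (A : Set B)) (haA : a ∈ A)
    (ha : 0 ≤ a) (hε : 0 < ε) :
    ∃ b ∈ herSub Set.univ a, IsSelfAdjoint b ∧ (spectrum ℂ (b : Unitization ℂ B)).Finite ∧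
      ‖a - b‖ ≤ ε := by
  obtain ⟨_, hmem, hb, hfin, hab⟩ := exists_finite_spectrum_norm_sub_le_of_nonneg
    (Unitization.inr_nonneg_iff.mpr ha)
    (fun s hs ↦ h.hasApproxUnitOfProjections_cutdown hA haA hs) hε
  rw [herSub_inr (.of_nonneg ha)] at hmem
  obtain ⟨b, hba, rfl⟩ := hmem
  refine ⟨b, hba, Unitization.isSelfAdjoint_inr.mp hb, hfin, ?_⟩
  rwa [← Unitization.inr_sub, Unitization.norm_inr] at hab

theorem InclusionRealRankZero.exists_finite_spectrum
    (h : InclusionRealRankZero (A : Set B) Set.univ) (hA : IsClosed (A : Set B)) (haA : a ∈ A)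
    (ha : IsSelfAdjoint a) (hε : 0 < ε) :
    ∃ b : B, IsSelfAdjoint b ∧ (spectrum ℂ (b : Unitization ℂ B)).Finite ∧ ‖a - b‖ ≤ ε := by
  obtain ⟨b, hb_mem, hb, hb_fin, hab⟩ := h.exists_finite_spectrum_of_nonneg hA
    (cfcₙ_mem (hs := hA) _ haA) (CFC.posPart_nonneg a) (half_pos hε)
  obtain ⟨c, hc_mem, hc, hc_fin, hac⟩ := h.exists_finite_spectrum_of_nonneg hA
    (cfcₙ_mem (hs := hA) _ haA) (CFC.negPart_nonneg a) (half_pos hε)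
  have hbc : (b : Unitization ℂ B) * c = 0 := by
    rw [← Unitization.inr_mul, mul_eq_zero_of_mem_herSub (CFC.posPart_mul_negPart a) hb_mem hc_mem,
      Unitization.inr_zero]
  refine ⟨b - c, hb.sub hc, ?_, ?_⟩
  · rw [Unitization.inr_sub]
    exact finite_spectrum_sub_of_mul_eq_zero hbc hb_fin hc_fin
  · calc ‖a - (b - c)‖ = ‖(a⁺ - b) - (a⁻ - c)‖ := by
          nth_rewrite 1 [← CFC.posPart_sub_negPart a]
          rw [sub_sub_sub_comm]
      _ ≤ ε / 2 + ε / 2 := norm_sub_le_of_le hab hac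
      _ = ε := add_halves ε

end RealRankZero

section Invertible

variable {D : Type*} [CStarAlgebra D] {a b x y : D} {δ ε : ℝ}

theorem exists_isUnit_norm_sub_le_of_finite_spectrum (hb : IsSelfAdjoint b)
    (hfin : (spectrum ℂ b).Finite) (hε : 0 < ε) :
    ∃ y : D, IsSelfAdjoint y ∧ IsUnit y ∧ ‖b - y‖ ≤ ε := by
  rcases subsingleton_or_nontrivial D with _ | _
  · exact ⟨b, hb, isUnit_of_subsingleton b, by simpa using hε.le⟩
  have hreal : {t : ℝ | (t : ℂ) ∈ spectrum ℂ b}.Finite :=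
    hfin.preimage Complex.ofReal_injective.injOn
  obtain ⟨t, ht, hts⟩ := ((Set.Ioo_infinite hε).sdiff hreal).nonempty
  refine ⟨b - algebraMap ℝ D t, hb.sub (.algebraMap D (.all t)), ?_, ?_⟩
  · rw [← IsUnit.neg_iff, neg_sub]
    exact spectrum.notMem_iff.mp hts
  · rw [sub_sub_cancel, norm_algebraMap', Real.norm_of_nonneg ht.1.le]
    exact ht.2.le

theorem exists_isUnit_norm_sub_le_of_snd {B : Type*} [NonUnitalCStarAlgebra B]
    {x : Unitization ℂ B} {b : B} (hx : IsSelfAdjoint x) (hb : IsSelfAdjoint b)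
    (hfin : (spectrum ℂ (b : Unitization ℂ B)).Finite) (hxb : ‖x.snd - b‖ ≤ δ) (hε : δ < ε) :
    ∃ y : Unitization ℂ B, IsSelfAdjoint y ∧ IsUnit y ∧ ‖x - y‖ ≤ ε := by
  have hfst : IsSelfAdjoint x.fst := by
    rw [isSelfAdjoint_iff, ← Unitization.fst_star, hx.star_eq]
  have hsa : IsSelfAdjoint (algebraMap ℂ _ x.fst + (b : Unitization ℂ B)) :=
    (hfst.algebraMap _).add (hb.inr ℂ)
  have hfin' : (spectrum ℂ (algebraMap ℂ _ x.fst + (b : Unitization ℂ B))).Finite := by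
    rw [← spectrum.singleton_add_eq]
    exact (Set.finite_singleton _).add hfin
  obtain ⟨y, hy, hunit, hby⟩ :=
    exists_isUnit_norm_sub_le_of_finite_spectrum hsa hfin' (sub_pos.mpr hε)
  refine ⟨y, hy, hunit, ?_⟩
  have hx_eq : x - (algebraMap ℂ _ x.fst + (b : Unitization ℂ B)) = ((x.snd - b : B) :) := by
    nth_rewrite 1 [← Unitization.inl_fst_add_inr_snd_eq x]
    rw [Unitization.algebraMap_eq_inl, add_sub_add_left_eq_sub, Unitization.inr_sub]
  calc ‖x - y‖ = ‖(x - (algebraMap ℂ _ x.fst + (b : Unitization ℂ B))) +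
          (algebraMap ℂ _ x.fst + (b : Unitization ℂ B) - y)‖ := by rw [sub_add_sub_cancel]
    _ ≤ δ + (ε - δ) := by
        refine norm_add_le_of_le ?_ hby
        rwa [hx_eq, Unitization.norm_inr]
    _ = ε := add_sub_cancel _ _

theorem exists_norm_posPart_sub_posPart_le (ha : IsSelfAdjoint a) (hε : 0 < ε) :
    ∃ δ > 0, ∀ b : D, IsSelfAdjoint b → ‖a - b‖ ≤ δ → ‖a⁺ - b⁺‖ ≤ ε := by
  have hcont : ContinuousOn (fun x : D ↦ x⁺) {x : D | IsSelfAdjoint x} :=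
    ContinuousOn.cfcₙ_of_mem_nhdsSet (s := Set.univ) (·⁺ : ℝ → ℝ) univ_mem continuousOn_id
      (fun _ hx ↦ hx) (by fun_prop)
  obtain ⟨δ, hδ, h⟩ := Metric.continuousOn_iff.mp hcont a ha ε hε
  refine ⟨δ / 2, half_pos hδ, fun b hb hab ↦ ?_⟩
  rw [← dist_eq_norm, dist_comm]
  refine (h b hb ?_).le
  rw [dist_comm, dist_eq_norm]
  linarith

theorem exists_isStarProjection_mul_posPart (hb : IsUnit b) :
    ∃ p : D, IsStarProjection p ∧ p * b⁺ = b⁺ ∧ p * b⁻ = 0 := by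
  set f : ℝ → ℝ := Set.indicator (Set.Ioi 0) 1 with hf
  have h0 : (0 : ℝ) ∉ spectrum ℝ b := spectrum.zero_notMem ℝ hb
  have hfc : ContinuousOn f (spectrum ℝ b) := by
    intro t ht
    rcases (ne_of_mem_of_not_mem ht h0).lt_or_gt with h | h
    · have : f =ᶠ[𝓝 t] fun _ ↦ 0 := by
        filter_upwards [Iio_mem_nhds h] with u hu
        simp [hf, (Set.mem_Iio.mp hu).le]
      exact (continuousAt_const.congr this.symm).continuousWithinAt
    · have : f =ᶠ[𝓝 t] fun _ ↦ 1 := by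
        filter_upwards [Ioi_mem_nhds h] with u hu
        simp [hf, hu]
      exact (continuousAt_const.congr this.symm).continuousWithinAt
  refine ⟨cfc f b, ⟨?_, cfc_predicate f b⟩, ?_, ?_⟩
  · rw [IsIdempotentElem, ← cfc_mul f f b]
    refine cfc_congr fun t _ ↦ ?_
    simp [hf, Set.indicator_apply]
  · rw [CFC.posPart_def, cfcₙ_eq_cfc, ← cfc_mul f _ b]
    refine cfc_congr fun t _ ↦ ?_
    rcases le_or_gt t 0 with h | h
    · simp [posPart_eq_zero.mpr h]
    · simp [hf, h]
  · rw [CFC.negPart_def, cfcₙ_eq_cfc, ← cfc_mul f _ b, ← cfc_const_zero ℝ b]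
    refine cfc_congr fun t _ ↦ ?_
    rcases le_or_gt t 0 with h | h
    · simp [hf, h]
    · simp [negPart_eq_zero.mpr h.le]

theorem exists_isStarProjection_separating [PartialOrder D] [StarOrderedRing D] (hx : 0 ≤ x)
    (hy : 0 ≤ y) (hxy : x * y = 0)
    (h : ∀ ε : ℝ, 0 < ε → ∃ b : D, IsSelfAdjoint b ∧ IsUnit b ∧ ‖x - y - b‖ ≤ ε) (hε : 0 < ε) :
    ∃ p : D, IsStarProjection p ∧ ‖p * x - x‖ ≤ ε ∧ ‖(1 - p) * y - y‖ ≤ ε := by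
  have hsa : IsSelfAdjoint (x - y) := (IsSelfAdjoint.of_nonneg hx).sub (.of_nonneg hy)
  obtain ⟨δ, hδ, hpos⟩ := exists_norm_posPart_sub_posPart_le hsa (half_pos hε)
  obtain ⟨b, hb, hunit, hxyb⟩ := h (min δ (ε / 2)) (by positivity)
  obtain ⟨p, hp, hp_pos, hp_neg⟩ := exists_isStarProjection_mul_posPart hunit
  have hxb : ‖x - b⁺‖ ≤ ε / 2 := by
    simpa only [(CFC.posPart_negPart_unique rfl hxy hx hy).1] using
      hpos b hb (hxyb.trans (min_le_left _ _))
  have hyb : ‖y - b⁻‖ ≤ ε := by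
    calc ‖y - b⁻‖ = ‖(x - b⁺) - (x - y - b)‖ := by
          nth_rewrite 3 [← CFC.posPart_sub_negPart b]
          congr 1
          abel
      _ ≤ ε / 2 + ε / 2 := norm_sub_le_of_le hxb (hxyb.trans (min_le_right _ _))
      _ = ε := add_halves ε
  refine ⟨p, hp, ?_, ?_⟩
  · calc ‖p * x - x‖ = ‖(1 - p) * (x - b⁺)‖ := by
          rw [mul_sub, sub_mul 1 p b⁺, hp_pos, one_mul, sub_self, sub_zero, sub_mul, one_mul,
            norm_sub_rev]
      _ ≤ 1 * (ε / 2) := norm_mul_le_of_le hp.one_sub.norm_le hxb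
      _ ≤ ε := by linarith
  · calc ‖(1 - p) * y - y‖ = ‖p * (y - b⁻)‖ := by
          rw [mul_sub, hp_neg, sub_zero, sub_mul, one_mul, sub_sub_cancel_left, norm_neg]
      _ ≤ 1 * ε := norm_mul_le_of_le hp.norm_le hyb
      _ = ε := one_mul ε

end Invertible

section Separation

variable {D : Type*} [CStarAlgebra D] {a e p : D} {δ ε η : ℝ}

theorem norm_conjugate_sub_le (he : IsSelfAdjoint e) (he1 : ‖e‖ ≤ 1) (hp : IsSelfAdjoint p)
    (h : ‖p * (1 - e)‖ ≤ ε) : ‖e * p * e - p‖ ≤ 2 * ε := by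
  have hstar : (1 - e) * p = star (p * (1 - e)) := by
    rw [star_mul, star_sub, star_one, he.star_eq, hp.star_eq]
  have hleft : ‖(1 - e) * p * e‖ ≤ ε * 1 := norm_mul_le_of_le (by rwa [hstar, norm_star]) he1
  calc ‖e * p * e - p‖ = ‖-((1 - e) * p * e + p * (1 - e))‖ := by
        congr 1
        noncomm_ring
    _ ≤ ε * 1 + ε := by
        rw [norm_neg]
        exact norm_add_le_of_le hleft h
    _ = 2 * ε := by ring

-- Rounding `e p e` keeps the projection inside the hereditary subalgebra.
theorem exists_isStarProjection_mem_herSub_norm_sub_le (ha : IsSelfAdjoint a)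
    (he : IsSelfAdjoint e) (hea : e ∈ herSub Set.univ a) (he1 : ‖e‖ ≤ 1)
    (hp : IsStarProjection p) (hε : ε ≤ 1 / 48) (h : ‖p * (1 - e)‖ ≤ ε) :
    ∃ r ∈ herSub Set.univ a, IsStarProjection r ∧ ‖r - p‖ ≤ 18 * ε := by
  have hsa : IsSelfAdjoint (e * p * e) := by
    simpa only [he.star_eq] using hp.isSelfAdjoint.conjugate e
  obtain ⟨hr, hrp⟩ := cfc_roundIdem_of_norm_sub_le hsa hp (by linarith)
    (norm_conjugate_sub_le he he1 hp.isSelfAdjoint h)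
  exact ⟨_, cfc_mem_herSub ha continuous_roundIdem roundIdem_zero (mul_mul_mem_herSub hea p hea),
    hr, hrp.trans_eq (by ring)⟩

variable [PartialOrder D] [StarOrderedRing D]

theorem exists_isStarProjection_norm_mul_sub_le (ha : 0 ≤ a) (hη : 0 < η) (hδ : 0 < δ)
    (h : ∀ ε : ℝ, 0 < ε → ∃ p : D, IsStarProjection p ∧ ‖p * cutdown a η - cutdown a η‖ ≤ ε ∧
      ‖(1 - p) * (1 - ramp a 0 η) - (1 - ramp a 0 η)‖ ≤ ε) :
    ∃ r ∈ herSub Set.univ a, IsStarProjection r ∧ ‖r * a - a‖ ≤ η + δ := by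
  have hsa : IsSelfAdjoint a := .of_nonneg ha
  set c := cutdown a η
  set e := ramp a 0 η
  set ε := min (1 / 48) (δ / (18 * ‖c‖ + 1))
  have hεδ : ε * (18 * ‖c‖ + 1) ≤ δ := (le_div_iff₀ (by positivity)).mp (min_le_right _ _)
  obtain ⟨p, hp, hpc, hpe⟩ := h ε (by positivity)
  have hea : e ∈ herSub Set.univ a := by
    simpa only [cutdown_eq_sub_algebraMap ha le_rfl, map_zero, sub_zero] using
      ramp_mem_herSub hsa 0 η
  have hpe' : ‖p * (1 - e)‖ ≤ ε := by
    rwa [sub_mul, one_mul, sub_sub_cancel_left, norm_neg] at hpe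
  obtain ⟨r, hra, hr, hrp⟩ := exists_isStarProjection_mem_herSub_norm_sub_le hsa
    (isSelfAdjoint_ramp a 0 η) hea (norm_ramp_le_one a 0 hη) hp (min_le_left _ _) hpe'
  have hrc : ‖r * c - c‖ ≤ δ :=
    calc ‖r * c - c‖ = ‖(r - p) * c + (p * c - c)‖ := by rw [sub_mul, sub_add_sub_cancel]
      _ ≤ 18 * ε * ‖c‖ + ε := norm_add_le_of_le (norm_mul_le_of_le hrp le_rfl) hpc
      _ ≤ δ := by linarith
  have hac : ‖(1 - r) * (a - c)‖ ≤ 1 * η :=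
    norm_mul_le_of_le hr.one_sub.norm_le (norm_sub_cutdown_le ha hη.le)
  refine ⟨r, hra, hr, ?_⟩
  calc ‖r * a - a‖ = ‖(r * c - c) - (1 - r) * (a - c)‖ := by
        congr 1
        noncomm_ring
    _ ≤ δ + 1 * η := norm_sub_le_of_le hrc hac
    _ = η + δ := by ring

theorem hasApproxUnitOfProjections_of_separating {B : Type*} [NonUnitalCStarAlgebra B]
    [PartialOrder B] [StarOrderedRing B] {A : NonUnitalStarSubalgebra ℂ B}
    (hA : IsClosed (A : Set B)) {a : B} (haA : a ∈ A) (ha : 0 ≤ a)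
    (h : ∀ x y : Unitization ℂ B, x.snd ∈ A → y.snd ∈ A → 0 ≤ x → 0 ≤ y → x * y = 0 →
      ∀ ε : ℝ, 0 < ε → ∃ p : Unitization ℂ B, IsProjection p ∧
        ‖p * x - x‖ ≤ ε ∧ ‖(1 - p) * y - y‖ ≤ ε) :
    HasApproxUnitOfProjections (herSub Set.univ a) := by
  rw [← hasApproxUnitOfProjections_herSub_inr_iff (.of_nonneg ha)]
  refine hasApproxUnitOfProjections_herSub fun δ hδ ↦ ?_
  set a' : Unitization ℂ B := (a : Unitization ℂ B)
  have hη : 0 < δ / 2 := half_pos hδ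
  have hcA : (cutdown a' (δ / 2)).snd ∈ A := by
    obtain ⟨c, hcA, hc⟩ : ∃ c ∈ A, (c : Unitization ℂ B) = cutdown a' (δ / 2) :=
      exists_mem_inr_eq_cfc hA haA (by simpa using hη.le)
    simpa [← hc] using hcA
  have heA : (1 - ramp a' 0 (δ / 2)).snd ∈ A := by
    obtain ⟨e, heA, he⟩ : ∃ e ∈ A, (e : Unitization ℂ B) = ramp a' 0 (δ / 2) :=
      exists_mem_inr_eq_cfc hA haA (by simp)
    simpa [← he, sub_eq_add_neg] using heA
  have hzero : cutdown a' (δ / 2) * (1 - ramp a' 0 (δ / 2)) = 0 := by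
    simpa only [zero_add] using cutdown_mul_one_sub_ramp a' 0 hη
  simpa only [add_halves] using exists_isStarProjection_norm_mul_sub_le
    (Unitization.inr_nonneg_iff.mpr ha) hη hη fun ε hε ↦ by
      simpa only [isProjection_iff_isStarProjection] using
        h _ _ hcA heA (cutdown_nonneg a' _) (sub_nonneg.mpr (ramp_le_one a' _ _)) hzero ε hε

end Separation

theorem stmt1 {B : Type*} [NonUnitalCStarAlgebra B] [PartialOrder B] [StarOrderedRing B]
    (A : NonUnitalStarSubalgebra ℂ B) (hA : IsClosed (A : Set B)) :
    List.TFAE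
      [InclusionRealRankZero (A : Set B) (Set.univ : Set B),
       -- (ii): self-adjoints in A approximated by self-adjoints in B with finite spectrum
       --       (spectrum computed in the unitization B†)
       ∀ a ∈ A, IsSelfAdjoint a → ∀ ε : ℝ, 0 < ε →
         ∃ b : B, IsSelfAdjoint b ∧ (spectrum ℂ (b : Unitization ℂ B)).Finite ∧ ‖a - b‖ ≤ ε,
       -- (iii): self-adjoints in A† approximated by invertible self-adjoints in B†
       ∀ x : Unitization ℂ B, x.snd ∈ A → IsSelfAdjoint x → ∀ ε : ℝ, 0 < ε →
         ∃ y : Unitization ℂ B, IsSelfAdjoint y ∧ IsUnit y ∧ ‖x - y‖ ≤ ε,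
       -- (iv): orthogonal positive elements of A† are separated by a projection in B†
       ∀ x y : Unitization ℂ B, x.snd ∈ A → y.snd ∈ A → 0 ≤ x → 0 ≤ y → x * y = 0 →
         ∀ ε : ℝ, 0 < ε → ∃ p : Unitization ℂ B, IsProjection p ∧
           ‖p * x - x‖ ≤ ε ∧ ‖(1 - p) * y - y‖ ≤ ε] := by
  tfae_have 1 → 2 := fun h a haA ha ε hε ↦ h.exists_finite_spectrum hA haA ha hε
  tfae_have 2 → 3 := fun h x hxA hx ε hε ↦ by
    have hsnd : IsSelfAdjoint x.snd := by rw [isSelfAdjoint_iff, ← Unitization.snd_star, hx.star_eq]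
    obtain ⟨b, hb, hfin, hxb⟩ := h x.snd hxA hsnd (ε / 2) (half_pos hε)
    exact exists_isUnit_norm_sub_le_of_snd hx hb hfin hxb (half_lt_self hε)
  tfae_have 3 → 4 := fun h x y hxA hyA hx hy hxy ε hε ↦ by
    have hsnd : (x - y).snd ∈ A := by simpa [sub_eq_add_neg] using sub_mem hxA hyA
    simpa only [isProjection_iff_isStarProjection] using exists_isStarProjection_separating hx hy
      hxy (h (x - y) hsnd ((IsSelfAdjoint.of_nonneg hx).sub (.of_nonneg hy))) hε
  tfae_have 4 → 1 := fun h a haA ha _ ↦ hasApproxUnitOfProjections_of_separating hA haA ha h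
  tfae_finish
end

section
/- Let B be a C*-algebra, and let (A_n) and (B_n) be increasing sequences of closed *-subalgebras of B (A_n ⊆ A_{n+1} and B_n ⊆ B_{n+1} for all n) such that A_n ⊆ B_n for every n. Let A = cl(⋃_n A_n) and B' = cl(⋃_n B_n) be the norm closures of the unions, so that A ⊆ B'. If there exists N ∈ ℕ such that for every n > N the inclusion A_n ⊆ B_n has real rank zero, then the inclusion A ⊆ B' has real rank zero. -/
open Filter Topology

/-!
Let `a ≥ 0` in `A` be given. Some positive `b` in some `A_i` is `r ^ 2`-close to `a`. Truncating the
spectrum of `b` at `r` and using real rank zero of `A_i ⊆ B_i`, one finds a projection `q` which is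
almost a unit for `b` and on which `b` has an inverse `g`, that is `b g q = q`, with `‖g‖ ≤ 1 / r`.
Then `a g q` is `r`-close to `q`, so the element `(a g q)(a g q)* = a (g q g) a` of `a B' a` is
almost a projection. The functional calculus turns it into a genuine projection of `a B' a` near
`q`, which is therefore almost a unit for `a`.
-/

section NormedRing

variable {B : Type*} [NonUnitalNormedRing B]

lemma herSub_subset_closure {σ : Type*} [SetLike σ B] [MulMemClass σ B] {S : σ} {a : B}
    (ha : a ∈ S) : herSub (S : Set B) a ⊆ closure (S : Set B) := by
  refine closure_mono ?_
  rintro _ ⟨b, hb, rfl⟩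
  exact mul_mem (mul_mem ha hb) ha

lemma mul_eq_self_of_mem_herSub {S : Set B} {a u x : B} (hu : u * a = a) (hx : x ∈ herSub S a) :
    u * x = x := by
  refine closure_minimal (t := {z : B | u * z = z}) ?_
    (isClosed_eq (continuous_const_mul u) continuous_id) hx
  rintro _ ⟨b, -, rfl⟩
  change u * (a * b * a) = a * b * a
  simp only [← mul_assoc, hu]

variable [StarRing B]

namespace IsProjection

variable [CStarRing B] {q : B}

lemma norm_le_one (hq : IsProjection q) : ‖q‖ ≤ 1 :=
  IsStarProjection.norm_le q ⟨hq.2, hq.1⟩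

lemma norm_mul_le_right (hq : IsProjection q) (z : B) : ‖q * z‖ ≤ ‖z‖ :=
  (norm_mul_le q z).trans (mul_le_of_le_one_left (norm_nonneg z) hq.norm_le_one)

lemma norm_mul_le_left (hq : IsProjection q) (z : B) : ‖z * q‖ ≤ ‖z‖ :=
  (norm_mul_le z q).trans (mul_le_of_le_one_right (norm_nonneg z) hq.norm_le_one)

lemma norm_mul_sub_self_le (hq : IsProjection q) (z : B) : ‖q * z - z‖ ≤ 2 * ‖z‖ := by
  linarith [norm_sub_le (q * z) z, hq.norm_mul_le_right z]

lemma norm_mul_sub_self_le_of_close (hq : IsProjection q) (x y : B) :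
    ‖q * x - x‖ ≤ ‖q * y - y‖ + 2 * ‖x - y‖ := by
  have hdecomp : q * x - x = (q * y - y) + (q * (x - y) - (x - y)) := by noncomm_ring
  rw [hdecomp]
  exact (norm_add_le _ _).trans (by gcongr; exact hq.norm_mul_sub_self_le _)

lemma norm_mul_self_sub_self_le (hq : IsProjection q) (x : B) :
    ‖x * x - x‖ ≤ (3 + ‖x - q‖) * ‖x - q‖ := by
  set e := x - q
  have hdecomp : x * x - x = e * e + q * e + e * q - e := by
    have hx : x = e + q := (sub_add_cancel x q).symm
    simp only [hx, add_mul, mul_add, hq.2]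
    abel
  calc ‖x * x - x‖ ≤ ‖e * e‖ + ‖q * e‖ + ‖e * q‖ + ‖e‖ := by
        rw [hdecomp]
        exact (norm_sub_le _ _).trans (by gcongr; exact norm_add₃_le)
    _ ≤ ‖e‖ * ‖e‖ + ‖e‖ + ‖e‖ + ‖e‖ := by
        gcongr
        exacts [norm_mul_le _ _, hq.norm_mul_le_right e, hq.norm_mul_le_left e]
    _ = (3 + ‖e‖) * ‖e‖ := by ring

lemma norm_mul_star_sub_le (hq : IsProjection q) (s : B) :
    ‖s * star s - q‖ ≤ (2 + ‖s - q‖) * ‖s - q‖ := by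
  set e := s - q
  have hdecomp : s * star s - q = e * star e + q * star e + e * q := by
    have hs : s = e + q := (sub_add_cancel s q).symm
    simp only [hs, star_add, add_mul, mul_add, hq.1, hq.2]
    abel
  calc ‖s * star s - q‖ ≤ ‖e * star e‖ + ‖q * star e‖ + ‖e * q‖ := by
        rw [hdecomp]
        exact norm_add₃_le
    _ ≤ ‖e‖ * ‖e‖ + ‖e‖ + ‖e‖ := by
        gcongr
        · exact CStarRing.norm_self_mul_star.le
        · exact (hq.norm_mul_le_right _).trans_eq (norm_star e)
        · exact hq.norm_mul_le_left e
    _ = (2 + ‖e‖) * ‖e‖ := by ring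

end IsProjection

lemma hasApproxUnitOfProjections_herSub_s14 [CStarRing B] [PartialOrder B] {S : Set B} {a : B}
    (h : ∀ ε : ℝ, 0 < ε → ∃ d ∈ S, IsProjection (a * d * a) ∧ ‖a * d * a * a - a‖ ≤ ε) :
    HasApproxUnitOfProjections (herSub S a) := by
  intro x hx _ ε hε
  obtain ⟨_, ⟨b, -, rfl⟩, hxb⟩ := Metric.mem_closure_iff.mp hx (ε / 4) (by positivity)
  rw [dist_eq_norm] at hxb
  obtain ⟨d, hd, hp, hpa⟩ := h (ε / (2 * (‖b * a‖ + 1))) (by positivity)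
  refine ⟨a * d * a, subset_closure ⟨d, hd, rfl⟩, hp, ?_⟩
  set p : B := a * d * a
  have hpx : ‖p * (a * b * a) - a * b * a‖ ≤ ε / 2 := calc
    ‖p * (a * b * a) - a * b * a‖ = ‖(p * a - a) * (b * a)‖ := by
      simp only [sub_mul, mul_assoc]
    _ ≤ ε / (2 * (‖b * a‖ + 1)) * (‖b * a‖ + 1) :=
      (norm_mul_le _ _).trans (by gcongr; linarith)
    _ = ε / 2 := by field_simp
  linarith [hp.norm_mul_sub_self_le_of_close x (a * b * a)]

lemma InclusionRealRankZero.hasApproxUnitOfProjections [CStarRing B] [PartialOrder B]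
    {A S : Set B} (h : InclusionRealRankZero A S) (hS : 0 ∈ S) {a : B} (haA : a ∈ A)
    (ha : 0 ≤ a) : HasApproxUnitOfProjections (herSub S a) := by
  rcases eq_or_ne a 0 with rfl | hne
  · exact hasApproxUnitOfProjections_herSub_s14 fun ε hε =>
      ⟨0, hS, ⟨by simp, by simp⟩, by simpa using hε.le⟩
  · exact h a haA ha hne

end NormedRing

section Truncation

/-- The cube root of the positive part `(t - r)₊`. It is applied to a positive element `b` to get
an element `c` whose hereditary subalgebra contains `c * c * c`, which is close to `b`. -/
noncomputable def truncatedCbrt (r t : ℝ) : ℝ := max (t - r) 0 ^ (1 / 3 : ℝ)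

/-- The inverse function truncated at `r`: it equals `t⁻¹` for `t ≥ r` and, as the non-unital
functional calculus requires, it is continuous and vanishes at `0`. -/
noncomputable def truncatedInv (r t : ℝ) : ℝ := t / max t r ^ 2

lemma continuous_truncatedCbrt (r : ℝ) : Continuous (truncatedCbrt r) :=
  Continuous.rpow_const (by fun_prop) fun _ => Or.inr (by norm_num)

lemma truncatedCbrt_nonneg (r t : ℝ) : 0 ≤ truncatedCbrt r t :=
  Real.rpow_nonneg (le_max_right _ _) _

lemma truncatedCbrt_of_le {r t : ℝ} (h : t ≤ r) : truncatedCbrt r t = 0 := by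
  rw [truncatedCbrt, max_eq_right (sub_nonpos.mpr h), Real.zero_rpow (by norm_num)]

lemma truncatedCbrt_mul_self_mul_self (r t : ℝ) :
    truncatedCbrt r t * truncatedCbrt r t * truncatedCbrt r t = max (t - r) 0 := by
  rw [← pow_three', truncatedCbrt, ← Real.rpow_natCast, ← Real.rpow_mul (le_max_right _ _)]
  norm_num

lemma continuous_truncatedInv {r : ℝ} (hr : 0 < r) : Continuous (truncatedInv r) :=
  Continuous.div (by fun_prop) (by fun_prop) fun _ => (pow_pos (lt_max_of_lt_right hr) 2).ne'

lemma abs_truncatedInv_le {r t : ℝ} (hr : 0 < r) (ht : 0 ≤ t) : |truncatedInv r t| ≤ 1 / r := by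
  have hmax : 0 < max t r := lt_max_of_lt_right hr
  rw [truncatedInv, abs_of_nonneg (by positivity), div_le_div_iff₀ (by positivity) hr, one_mul, sq]
  exact mul_le_mul (le_max_left t r) (le_max_right t r) hr.le hmax.le

lemma mul_truncatedInv_mul_truncatedCbrt {r : ℝ} (hr : 0 < r) (t : ℝ) :
    t * truncatedInv r t * truncatedCbrt r t = truncatedCbrt r t := by
  rcases le_total t r with htr | hrt
  · rw [truncatedCbrt_of_le htr, mul_zero]
  · have : t ≠ 0 := (hr.trans_le hrt).ne'
    rw [truncatedInv, max_eq_left hrt]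
    field_simp

end Truncation

section FunctionalCalculus

variable {B : Type*} [NonUnitalCStarAlgebra B] {C : NonUnitalStarSubalgebra ℂ B}

lemma continuousOn_indicator_Ioi {f : ℝ → ℝ} {c : ℝ} {s : Set ℝ} (hc : c ∉ s)
    (hf : ContinuousOn f (Set.Ioi c)) : ContinuousOn ((Set.Ioi c).indicator f) s := by
  intro t ht
  refine ContinuousAt.continuousWithinAt ?_
  rcases (ne_of_mem_of_not_mem ht hc).lt_or_gt with htc | htc
  · refine (continuousAt_const (y := (0 : ℝ))).congr ?_
    filter_upwards [Iio_mem_nhds htc] with u hu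
    exact (Set.indicator_of_notMem (lt_asymm hu) f).symm
  · refine (hf.continuousAt (Ioi_mem_nhds htc)).congr ?_
    filter_upwards [Ioi_mem_nhds htc] with u hu
    exact (Set.indicator_of_mem hu f).symm

lemma abs_indicator_Ioi_one_half_sub_le (t : ℝ) :
    |(Set.Ioi (1 / 2 : ℝ)).indicator 1 t - t| ≤ 2 * |t * t - t| := by
  have hfactor : |t * t - t| = |t| * |t - 1| := by rw [← abs_mul]; ring_nf
  rcases lt_or_ge (1 / 2) t with ht | ht
  · rw [Set.indicator_of_mem (Set.mem_Ioi.mpr ht), Pi.one_apply, abs_sub_comm, hfactor]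
    nlinarith [abs_nonneg (t - 1), le_abs_self t]
  · rw [Set.indicator_of_notMem (by simpa using ht), zero_sub, abs_neg, hfactor]
    nlinarith [abs_nonneg t, neg_abs_le (t - 1)]

lemma abs_mul_self_sub_self_le_norm {x : B} (hx : IsSelfAdjoint x) {t : ℝ}
    (ht : t ∈ quasispectrum ℝ x) : |t * t - t| ≤ ‖x * x - x‖ := by
  have hcfc : cfcₙ (fun t : ℝ => t * t - t) x = x * x - x := by
    rw [cfcₙ_sub .., cfcₙ_mul .., cfcₙ_id' ℝ x]
  exact hcfc ▸ norm_apply_le_norm_cfcₙ (fun t : ℝ => t * t - t) x ht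

lemma exists_isProjection_conj_of_norm_mul_self_sub_lt (hC : IsClosed (C : Set B)) {x : B}
    (hxC : x ∈ C) (hx : IsSelfAdjoint x) (hlt : ‖x * x - x‖ < 1 / 4) :
    ∃ y ∈ C, IsProjection (x * y * x) ∧ ‖x * y * x - x‖ ≤ 2 * ‖x * x - x‖ := by
  set χ : ℝ → ℝ := (Set.Ioi (1 / 2)).indicator 1
  set k : ℝ → ℝ := (Set.Ioi (1 / 2)).indicator fun t => (t * t)⁻¹
  have hid : cfcₙ (fun t : ℝ => t) x = x := cfcₙ_id' ℝ x
  have hhalf : (1 / 2 : ℝ) ∉ quasispectrum ℝ x := fun hmem => by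
    have := (abs_mul_self_sub_self_le_norm hx hmem).trans_lt hlt
    norm_num at this
  have hχ : ContinuousOn χ (quasispectrum ℝ x) :=
    continuousOn_indicator_Ioi hhalf continuousOn_const
  have hk : ContinuousOn k (quasispectrum ℝ x) := by
    refine continuousOn_indicator_Ioi hhalf (ContinuousOn.inv₀ (by fun_prop) fun t ht => ?_)
    have : 0 < t := one_half_pos.trans ht
    positivity
  have hconj : x * cfcₙ k x * x = cfcₙ χ x := by
    nth_rewrite 1 3 [← hid]
    rw [← cfcₙ_mul .., ← cfcₙ_mul ..]
    refine cfcₙ_congr fun t _ => ?_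
    by_cases ht : t ∈ Set.Ioi (1 / 2 : ℝ)
    · have : t ≠ 0 := (one_half_pos.trans ht).ne'
      simp only [χ, k, Set.indicator_of_mem ht, Pi.one_apply]
      field_simp
    · simp only [χ, k, Set.indicator_of_notMem ht, mul_zero, zero_mul]
  have hidem : cfcₙ χ x * cfcₙ χ x = cfcₙ χ x := by
    rw [← cfcₙ_mul ..]
    refine cfcₙ_congr fun t _ => ?_
    by_cases ht : t ∈ Set.Ioi (1 / 2 : ℝ)
    · simp only [χ, Set.indicator_of_mem ht, Pi.one_apply, mul_one]
    · simp only [χ, Set.indicator_of_notMem ht, mul_zero]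
  refine ⟨cfcₙ k x, cfcₙ_mem (hs := hC) k hxC, ?_⟩
  rw [hconj]
  refine ⟨⟨(cfcₙ_predicate χ x).star_eq, hidem⟩, ?_⟩
  nth_rewrite 2 [← hid]
  rw [← cfcₙ_sub ..]
  refine norm_cfcₙ_le fun t ht => (abs_indicator_Ioi_one_half_sub_le t).trans ?_
  gcongr
  exact abs_mul_self_sub_self_le_norm hx ht

lemma IsProjection.exists_isProjection_conj_near (hC : IsClosed (C : Set B)) {q x : B}
    (hq : IsProjection q) (hxC : x ∈ C) (hx : IsSelfAdjoint x) (hxq : ‖x - q‖ ≤ 1 / 16) :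
    ∃ y ∈ C, IsProjection (x * y * x) ∧ ‖x * y * x - q‖ ≤ 8 * ‖x - q‖ := by
  have hidem : ‖x * x - x‖ ≤ 49 / 16 * ‖x - q‖ :=
    (hq.norm_mul_self_sub_self_le x).trans (by gcongr; linarith)
  obtain ⟨y, hyC, hp, hpx⟩ :=
    exists_isProjection_conj_of_norm_mul_self_sub_lt hC hxC hx (by linarith)
  refine ⟨y, hyC, hp, ?_⟩
  linarith [norm_sub_le_norm_sub_add_norm_sub (x * y * x) x q, norm_nonneg (x - q)]

lemma IsProjection.exists_isProjection_conj_of_norm_mul_mul_sub_le (hC : IsClosed (C : Set B))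
    {a g q : B} (hq : IsProjection q) (haC : a ∈ C) (hgC : g ∈ C) (hqC : q ∈ C)
    (ha : IsSelfAdjoint a) (hg : IsSelfAdjoint g) (hs : ‖a * g * q - q‖ ≤ 1 / 48) :
    ∃ d ∈ C, IsProjection (a * d * a) ∧ ‖a * d * a - q‖ ≤ 24 * ‖a * g * q - q‖ := by
  set s := a * g * q
  have hsC : s ∈ C := mul_mem (mul_mem haC hgC) hqC
  have hsq : ‖s * star s - q‖ ≤ 3 * ‖s - q‖ := by
    nlinarith [hq.norm_mul_star_sub_le s, norm_nonneg (s - q)]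
  obtain ⟨y, hyC, hp, hpq⟩ := hq.exists_isProjection_conj_near hC
    (mul_mem hsC (star_mem hsC)) (IsSelfAdjoint.mul_star_self s) (by linarith)
  have hss : s * star s = a * (g * q * g) * a := by
    simp only [s, star_mul, ha.star_eq, hg.star_eq, hq.1, mul_assoc]
    rw [← mul_assoc q q, hq.2]
  set m := g * q * g
  have hmC : m ∈ C := mul_mem (mul_mem hgC hqC) hgC
  have hconj : s * star s * y * (s * star s) = a * (m * a * y * a * m) * a := by
    simp only [hss, mul_assoc]
  rw [hconj] at hp hpq
  exact ⟨m * a * y * a * m,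
    mul_mem (mul_mem (mul_mem (mul_mem hmC haC) hyC) haC) hmC, hp, by linarith⟩

lemma mul_cfcₙ_truncatedInv_mul_cfcₙ_truncatedCbrt {b : B} (hb : IsSelfAdjoint b) {r : ℝ}
    (hr : 0 < r) :
    b * cfcₙ (truncatedInv r) b * cfcₙ (truncatedCbrt r) b = cfcₙ (truncatedCbrt r) b := by
  have hf := continuous_truncatedCbrt r
  have hf0 : truncatedCbrt r 0 = 0 := truncatedCbrt_of_le hr.le
  have hk := continuous_truncatedInv hr
  have hk0 : truncatedInv r 0 = 0 := zero_div _
  nth_rewrite 1 [← cfcₙ_id' ℝ b]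
  rw [← cfcₙ_mul .., ← cfcₙ_mul ..]
  exact cfcₙ_congr fun t _ => mul_truncatedInv_mul_truncatedCbrt hr t

variable [PartialOrder B] [StarOrderedRing B]

lemma mem_closure_nonneg_of_mem_closure {a : B} (haC : a ∈ closure (C : Set B)) (ha : 0 ≤ a) :
    a ∈ closure {b | b ∈ C ∧ 0 ≤ b} := by
  have hsqrt : CFC.sqrt a ∈ closure (C : Set B) := by
    rw [CFC.sqrt_eq_real_sqrt a]
    exact cfcₙ_mem (s := C.topologicalClosure) (hs := C.isClosed_topologicalClosure) _ haC
  have hsq : star (CFC.sqrt a) * CFC.sqrt a = a := by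
    rw [(CFC.sqrt_nonneg a).isSelfAdjoint.star_eq, CFC.sqrt_mul_sqrt_self a]
  rw [← hsq]
  exact map_mem_closure (f := fun z => star z * z) (by fun_prop) hsqrt
    fun z hz => ⟨mul_mem (star_mem hz) hz, star_mul_self_nonneg z⟩

lemma norm_sub_cfcₙ_truncatedCbrt_le {b : B} (hb : 0 ≤ b) {r : ℝ} (hr : 0 < r) :
    ‖b - cfcₙ (truncatedCbrt r) b * cfcₙ (truncatedCbrt r) b * cfcₙ (truncatedCbrt r) b‖ ≤ r := by
  have hf := continuous_truncatedCbrt r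
  have hf0 : truncatedCbrt r 0 = 0 := truncatedCbrt_of_le hr.le
  nth_rewrite 1 [← cfcₙ_id' ℝ b]
  rw [← cfcₙ_mul .., ← cfcₙ_mul .., ← cfcₙ_sub ..]
  refine norm_cfcₙ_le fun t ht => ?_
  have ht0 : 0 ≤ t := quasispectrum_nonneg_of_nonneg b hb t ht
  rw [truncatedCbrt_mul_self_mul_self, Real.norm_eq_abs, abs_le]
  rcases max_cases (t - r) 0 with h | h <;> constructor <;> linarith

lemma norm_cfcₙ_truncatedInv_le {b : B} (hb : 0 ≤ b) {r : ℝ} (hr : 0 < r) :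
    ‖cfcₙ (truncatedInv r) b‖ ≤ 1 / r :=
  norm_cfcₙ_le fun t ht =>
    abs_truncatedInv_le hr (quasispectrum_nonneg_of_nonneg b hb t ht)

namespace InclusionRealRankZero

variable {A S : NonUnitalStarSubalgebra ℂ B}

lemma exists_isProjection_mul_mul_eq (h : InclusionRealRankZero (A : Set B) (S : Set B))
    (hA : IsClosed (A : Set B)) (hAS : A ≤ S) {b : B} (hbA : b ∈ A) (hb : 0 ≤ b)
    {r : ℝ} (hr : 0 < r) :
    ∃ q ∈ closure (S : Set B), ∃ g ∈ S, IsProjection q ∧ IsSelfAdjoint g ∧ ‖g‖ ≤ 1 / r ∧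
      b * g * q = q ∧ ‖q * b - b‖ ≤ 3 * r := by
  set c := cfcₙ (truncatedCbrt r) b
  set g := cfcₙ (truncatedInv r) b
  have hcA : c ∈ A := cfcₙ_mem (hs := hA) _ hbA
  have hgA : g ∈ A := cfcₙ_mem (hs := hA) _ hbA
  have hc : 0 ≤ c := cfcₙ_nonneg fun t _ => truncatedCbrt_nonneg r t
  have hcube : 0 ≤ c * c * c := by
    simpa only [hc.isSelfAdjoint.star_eq] using star_left_conjugate_nonneg hc c
  obtain ⟨q, hqher, hq, hqc⟩ := h.hasApproxUnitOfProjections (zero_mem S) hcA hc (c * c * c)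
    (subset_closure ⟨c, hAS hcA, rfl⟩) hcube r hr
  refine ⟨q, herSub_subset_closure (hAS hcA) hqher, g, hAS hgA, hq,
    cfcₙ_predicate _ b, norm_cfcₙ_truncatedInv_le hb hr, mul_eq_self_of_mem_herSub
      (mul_cfcₙ_truncatedInv_mul_cfcₙ_truncatedCbrt hb.isSelfAdjoint hr) hqher, ?_⟩
  have hbc : ‖b - c * c * c‖ ≤ r := norm_sub_cfcₙ_truncatedCbrt_le hb hr
  linarith [hq.norm_mul_sub_self_le_of_close b (c * c * c)]

lemma exists_isProjection_conj_of_norm_sub_le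
    (h : InclusionRealRankZero (A : Set B) (S : Set B)) (hA : IsClosed (A : Set B)) (hAS : A ≤ S)
    (hC : IsClosed (C : Set B)) (hSC : S ≤ C) {a b : B} (haC : a ∈ C) (ha : IsSelfAdjoint a)
    (hbA : b ∈ A) (hb : 0 ≤ b) {r : ℝ} (hr : 0 < r) (hr48 : r ≤ 1 / 48)
    (hab : ‖a - b‖ ≤ r ^ 2) :
    ∃ d ∈ C, IsProjection (a * d * a) ∧ ‖a * d * a * a - a‖ ≤ r * (24 * ‖a‖ + 4) := by
  obtain ⟨q, hqS, g, hgS, hq, hg, hgr, hbgq, hqb⟩ :=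
    h.exists_isProjection_mul_mul_eq hA hAS hbA hb hr
  have hqC : q ∈ C := closure_minimal hSC hC hqS
  have hagq : ‖a * g * q - q‖ ≤ r := calc
    ‖a * g * q - q‖ = ‖(a - b) * g * q‖ := by rw [sub_mul, sub_mul, hbgq]
    _ ≤ ‖a - b‖ * ‖g‖ := (hq.norm_mul_le_left _).trans (norm_mul_le _ _)
    _ ≤ r ^ 2 * (1 / r) := by gcongr
    _ = r := by field_simp
  obtain ⟨d, hdC, hp, hpq⟩ := hq.exists_isProjection_conj_of_norm_mul_mul_sub_le hC haC
    (hSC hgS) hqC ha hg (hagq.trans hr48)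
  refine ⟨d, hdC, hp, ?_⟩
  set p := a * d * a
  have hqa : ‖q * a - a‖ ≤ 3 * r + 2 * r ^ 2 := by
    linarith [hq.norm_mul_sub_self_le_of_close a b]
  calc ‖p * a - a‖ = ‖(p - q) * a + (q * a - a)‖ := by rw [sub_mul, sub_add_sub_cancel]
    _ ≤ ‖p - q‖ * ‖a‖ + ‖q * a - a‖ :=
        (norm_add_le _ _).trans (by gcongr; exact norm_mul_le _ _)
    _ ≤ 24 * r * ‖a‖ + (3 * r + 2 * r ^ 2) := by
        gcongr
        linarith
    _ ≤ r * (24 * ‖a‖ + 4) := by nlinarith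

end InclusionRealRankZero

lemma hasApproxUnitOfProjections_herSub_of_approx (hC : IsClosed (C : Set B)) {a : B}
    (haC : a ∈ C) (ha : IsSelfAdjoint a)
    (happ : ∀ δ : ℝ, 0 < δ → ∃ A S : NonUnitalStarSubalgebra ℂ B, IsClosed (A : Set B) ∧
      A ≤ S ∧ S ≤ C ∧ InclusionRealRankZero (A : Set B) (S : Set B) ∧
      ∃ b ∈ A, 0 ≤ b ∧ ‖a - b‖ ≤ δ) :
    HasApproxUnitOfProjections (herSub (C : Set B) a) := by
  refine hasApproxUnitOfProjections_herSub_s14 fun ε hε => ?_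
  set r : ℝ := min (1 / 48) (ε / (24 * ‖a‖ + 4))
  have hr : 0 < r := lt_min (by norm_num) (by positivity)
  have hrε : r * (24 * ‖a‖ + 4) ≤ ε := (le_div_iff₀ (by positivity)).mp (min_le_right _ _)
  obtain ⟨A, S, hA, hAS, hSC, h, b, hbA, hb, hab⟩ := happ (r ^ 2) (by positivity)
  obtain ⟨d, hd, hp, hpa⟩ := h.exists_isProjection_conj_of_norm_sub_le hA hAS hC hSC haC ha
    hbA hb hr (min_le_left _ _) hab
  exact ⟨d, hd, hp, hpa.trans hrε⟩

end FunctionalCalculus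

theorem stmt14_general {ι B : Type*} [Preorder ι] [IsDirectedOrder ι]
    [NonUnitalCStarAlgebra B] [PartialOrder B] [StarOrderedRing B]
    {A S : ι → NonUnitalStarSubalgebra ℂ B} (hA : Monotone A) (hS : Monotone S)
    (hAS : ∀ i, A i ≤ S i)
    (h : ∃ᶠ i in atTop, IsClosed (A i : Set B) ∧
      InclusionRealRankZero (A i : Set B) (S i : Set B)) :
    InclusionRealRankZero (closure (⋃ i, (A i : Set B))) (closure (⋃ i, (S i : Set B))) := by
  obtain ⟨i₀, -⟩ := h.exists
  have : Nonempty ι := ⟨i₀⟩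
  have hA_coe := NonUnitalStarSubalgebra.coe_iSup_of_directed hA.directed_le
  rw [← hA_coe, ← NonUnitalStarSubalgebra.coe_iSup_of_directed hS.directed_le]
  intro a haA ha _
  have haS : a ∈ (⨆ i, S i).topologicalClosure :=
    closure_mono (SetLike.coe_subset_coe.mpr (iSup_mono hAS)) haA
  refine hasApproxUnitOfProjections_herSub_of_approx
    (⨆ i, S i).isClosed_topologicalClosure haS ha.isSelfAdjoint fun δ hδ => ?_
  obtain ⟨b, ⟨hbA, hb⟩, hab⟩ := Metric.mem_closure_iff.mp
    (mem_closure_nonneg_of_mem_closure haA ha) δ hδ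
  obtain ⟨i, hbi⟩ : ∃ i, b ∈ A i := by rwa [← SetLike.mem_coe, hA_coe, Set.mem_iUnion] at hbA
  obtain ⟨j, hij, hAj, hj⟩ := frequently_atTop.mp h i
  exact ⟨A j, S j, hAj, hAS j,
    (le_iSup S j).trans (NonUnitalStarSubalgebra.le_topologicalClosure _), hj,
    b, hA hij hbi, hb, dist_eq_norm a b ▸ hab.le⟩

theorem stmt14 {B : Type*} [NonUnitalCStarAlgebra B] [PartialOrder B] [StarOrderedRing B]
    (An Bn : ℕ → NonUnitalStarSubalgebra ℂ B)
    (hAc : ∀ n, IsClosed ((An n : Set B))) (hBc : ∀ n, IsClosed ((Bn n : Set B)))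
    (hAmono : ∀ n, (An n : Set B) ⊆ (An (n + 1) : Set B))
    (hBmono : ∀ n, (Bn n : Set B) ⊆ (Bn (n + 1) : Set B))
    (hAB : ∀ n, (An n : Set B) ⊆ (Bn n : Set B))
    (N : ℕ) (h : ∀ n > N, InclusionRealRankZero (An n : Set B) (Bn n : Set B)) :
    InclusionRealRankZero (closure (⋃ n, (An n : Set B)))
      (closure (⋃ n, (Bn n : Set B))) :=
  stmt14_general (monotone_nat_of_le_succ hAmono) (monotone_nat_of_le_succ hBmono) hAB
    ((eventually_gt_atTop N).mono fun n hn => ⟨hAc n, h n hn⟩).frequently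
end
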